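/- If c is a recurrent chip configuration, then the stabilization (ĉ)° of its restriction ĉ is an s-recurrent configuration. Moreover, if c and d are recurrent chip configurations with c ~ d, then (ĉ)° ~_s (d̂)°. -/

import Mathlib

open Finset Polynomial

namespace SandpileBM

variable {V E : Type} [Fintype V] [DecidableEq V] [Fintype E] [DecidableEq E]

/-- The number of edges from `v` to `w` in the multigraph given by `src`, `tgt`. -/
def numEdges (src tgt : E → V) (v w : V) : ℕ :=
  (Finset.univ.filter fun e => src e = v ∧ tgt e = w).card

/-- The out-degree of a vertex. -/
def outdeg (src : E → V) (v : V) : ℕ :=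
  (Finset.univ.filter fun e => src e = v).card

/-- The in-degree of a vertex. -/
def indeg (tgt : E → V) (v : V) : ℕ :=
  (Finset.univ.filter fun e => tgt e = v).card

/-- The digraph is strongly connected: any vertex is reachable from any other by
a directed path. -/
def StronglyConnected (src tgt : E → V) : Prop :=
  ∀ v w : V, Relation.ReflTransGen (fun a b => ∃ e : E, src e = a ∧ tgt e = b) v w

/-- Result of firing the vertex `v` on the chip configuration `c` (sinkless model). -/
def fire (src tgt : E → V) (c : V → ℕ) (v : V) : V → ℕ :=
  fun w => c w + numEdges src tgt v w - (if w = v then outdeg src v else 0)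

/-- One legal firing move in the sinkless model. -/
def FireStep (src tgt : E → V) (c d : V → ℕ) : Prop :=
  ∃ v : V, outdeg src v ≤ c v ∧ d = fire src tgt c v

/-- `Reach c d`: `d` is obtained from `c` by a finite sequence of legal firing moves. -/
def Reach (src tgt : E → V) : (V → ℕ) → (V → ℕ) → Prop :=
  Relation.ReflTransGen (FireStep src tgt)

/-- Stability of a chip configuration. -/
def Stable (src : E → V) (c : V → ℕ) : Prop :=
  ∀ v : V, c v < outdeg src v

/-- A chip configuration is recurrent if it is not stable and every configuration
accessible from it can reach it back. -/
def Recurrent (src tgt : E → V) (c : V → ℕ) : Prop :=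
  ¬ Stable src c ∧ ∀ d : V → ℕ, Reach src tgt c d → Reach src tgt d c

/-- Level (total number of chips) of a chip configuration. -/
def lvl (c : V → ℕ) : ℕ := ∑ v : V, c v

/-- Indicator function of the vertex `s`. -/
def deltaS (s : V) : V → ℕ := fun v => if v = s then 1 else 0

/-- Result of firing the vertex `v` on an `s`-configuration. -/
def sfire (src tgt : E → V) (s : V) (c : {v : V // v ≠ s} → ℕ) (v : {v : V // v ≠ s}) :
    {v : V // v ≠ s} → ℕ :=
  fun w => c w + numEdges src tgt v.1 w.1 - (if w = v then outdeg src v.1 else 0)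

/-- One legal s-firing move. -/
def SFireStep (src tgt : E → V) (s : V) (c d : {v : V // v ≠ s} → ℕ) : Prop :=
  ∃ v : {v : V // v ≠ s}, outdeg src v.1 ≤ c v ∧ d = sfire src tgt s c v

/-- `SReach c d`: `d` is obtained from `c` by a finite sequence of legal s-firing moves. -/
def SReach (src tgt : E → V) (s : V) :
    ({v : V // v ≠ s} → ℕ) → ({v : V // v ≠ s} → ℕ) → Prop :=
  Relation.ReflTransGen (SFireStep src tgt s)

/-- Stability of an `s`-configuration. -/
def SStable (src : E → V) (s : V) (c : {v : V // v ≠ s} → ℕ) : Prop :=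
  ∀ v : {v : V // v ≠ s}, c v < outdeg src v.1

/-- The stabilization `c°` of an `s`-configuration: the (for strongly connected digraphs,
unique) stable `s`-configuration reachable from `c` by legal s-firing moves. -/
noncomputable def stab (src tgt : E → V) (s : V) (c : {v : V // v ≠ s} → ℕ) :
    {v : V // v ≠ s} → ℕ :=
  Classical.epsilon fun d => SReach src tgt s c d ∧ SStable src s d

/-- An `s`-configuration `c` is s-recurrent if every `s`-configuration can be completed
to one whose stabilization is `c`. -/
def SRecurrent (src tgt : E → V) (s : V) (c : {v : V // v ≠ s} → ℕ) : Prop :=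
  ∀ c₁ : {v : V // v ≠ s} → ℕ, ∃ c₂ : {v : V // v ≠ s} → ℕ,
    stab src tgt s (c₁ + c₂) = c

/-- `β_s`, recording the number of edges from `s` to each other vertex. -/
def betaS (src tgt : E → V) (s : V) : {v : V // v ≠ s} → ℕ :=
  fun v => numEdges src tgt s v.1

/-- The relation `~_s` on s-recurrent configurations: `d = (c + k·β_s)°` for some `k`. -/
def SEquiv (src tgt : E → V) (s : V) (c d : {v : V // v ≠ s} → ℕ) : Prop :=
  ∃ k : ℕ, stab src tgt s (c + k • betaS src tgt s) = d

/-- Restriction of a chip configuration to `V ∖ {s}`. -/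
def restrictS (s : V) (c : V → ℕ) : {v : V // v ≠ s} → ℕ := fun v => c v.1

/-- Extension `c̄` of an `s`-configuration by `0` at `s`. -/
def extendS (s : V) (c : {v : V // v ≠ s} → ℕ) : V → ℕ :=
  fun v => if h : v = s then 0 else c ⟨v, h⟩

/-- The s-index `χ(c)`: the least `k` such that `c̄ + k·δ_s` is recurrent. -/
noncomputable def sIndex (src tgt : E → V) (s : V) (c : {v : V // v ≠ s} → ℕ) : ℕ :=
  sInf {k : ℕ | Recurrent src tgt (extendS s c + k • deltaS s)}

/-- `φ(c) := c̄ + χ(c)·δ_s`. -/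
noncomputable def phi (src tgt : E → V) (s : V) (c : {v : V // v ≠ s} → ℕ) : V → ℕ :=
  extendS s c + sIndex src tgt s c • deltaS s

/-- The s-level `slvl(c) := χ(c) + Σ_{v ≠ s} c(v)`. -/
noncomputable def slvl (src tgt : E → V) (s : V) (c : {v : V // v ≠ s} → ℕ) : ℕ :=
  sIndex src tgt s c + ∑ v : {v : V // v ≠ s}, c v

/-- The d-level `dlvl(c) := deg⁺(s) + Σ_{v ≠ s} c(v)`. -/
def dlvl (src : E → V) (s : V) (c : {v : V // v ≠ s} → ℕ) : ℕ :=
  outdeg src s + ∑ v : {v : V // v ≠ s}, c v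

/-- The set (as a type) of recurrent chip configurations. -/
abbrev RecL (src tgt : E → V) := {c : V → ℕ // Recurrent src tgt c}

/-- The setoid on recurrent configurations generated by the relation `~` (i.e. `⤳`). -/
def recLSetoid (src tgt : E → V) : Setoid (RecL src tgt) :=
  Relation.EqvGen.setoid fun a b => Reach src tgt a.1 b.1

/-- The set of `~`-classes of recurrent configurations. -/
abbrev RecLQuot (src tgt : E → V) := Quotient (recLSetoid src tgt)

/-- The set (as a type) of s-recurrent configurations. -/
abbrev RecS (src tgt : E → V) (s : V) := {c : {v : V // v ≠ s} → ℕ // SRecurrent src tgt s c}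

/-- The setoid on s-recurrent configurations generated by the relation `~_s`. -/
def recSSetoid (src tgt : E → V) (s : V) : Setoid (RecS src tgt s) :=
  Relation.EqvGen.setoid fun a b => SEquiv src tgt s a.1 b.1

/-- The set of `~_s`-classes of s-recurrent configurations. -/
abbrev RecSQuot (src tgt : E → V) (s : V) := Quotient (recSSetoid src tgt s)

/-- The level of a `~`-class of recurrent configurations (level is constant on classes). -/
noncomputable def lvlClass (src tgt : E → V) (q : RecLQuot src tgt) : ℕ :=
  sSup ((fun c : RecL src tgt => lvl c.1) '' {c | Quotient.mk (recLSetoid src tgt) c = q})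

/-- The s-level of a `~_s`-class (s-level is constant on classes). -/
noncomputable def slvlClass (src tgt : E → V) (s : V) (q : RecSQuot src tgt s) : ℕ :=
  sSup ((fun c : RecS src tgt s => slvl src tgt s c.1) ''
    {c | Quotient.mk (recSSetoid src tgt s) c = q})

/-- The d-level of a `~_s`-class: the maximum d-level over the class. -/
noncomputable def dlvlClass (src tgt : E → V) (s : V) (q : RecSQuot src tgt s) : ℕ :=
  sSup ((fun c : RecS src tgt s => dlvl src s c.1) ''
    {c | Quotient.mk (recSSetoid src tgt s) c = q})

/-- The Biggs–Merino polynomial `B(G,s;y) = Σ_{[c] ∈ Rec(G,s)/~_s} y^{dlvl([c])}`. -/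
noncomputable def BM (src tgt : E → V) (s : V) : Polynomial ℤ :=
  ∑ᶠ q : RecSQuot src tgt s, X ^ dlvlClass src tgt s q

/-- `LegalSeq l c d`: firing the vertices in the list `l` in order is a sequence of
legal firing moves transforming `c` into `d` (sinkless model). -/
def LegalSeq (src tgt : E → V) : List V → (V → ℕ) → (V → ℕ) → Prop
  | [], c, d => d = c
  | v :: l, c, d => outdeg src v ≤ c v ∧ LegalSeq src tgt l (fire src tgt c v) d

/-- `SLegalSeq l c d`: firing the vertices in the list `l` in order is a sequence of
legal s-firing moves transforming `c` into `d`. -/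
def SLegalSeq (src tgt : E → V) (s : V) :
    List {v : V // v ≠ s} → ({v : V // v ≠ s} → ℕ) → ({v : V // v ≠ s} → ℕ) → Prop
  | [], c, d => d = c
  | v :: l, c, d => outdeg src v.1 ≤ c v ∧ SLegalSeq src tgt s l (sfire src tgt s c v) d

/-- The configuration obtained from `c` after firing the vertices of `l` in order. -/
def iterFire (src tgt : E → V) (c : V → ℕ) (l : List V) : V → ℕ :=
  l.foldl (fire src tgt) c

/-- The Laplacian of the digraph applied to an integer vector:
`(Δq)(v) = deg⁺(v)·q(v) − Σ_w A(w,v)·q(w)`. -/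
def lapApply (src tgt : E → V) (q : V → ℤ) : V → ℤ :=
  fun v => (outdeg src v : ℤ) * q v - ∑ w : V, (numEdges src tgt w v : ℤ) * q w

/-- `r` is the primitive period vector of the digraph: it has positive entries with
gcd `1`, lies in the kernel of the Laplacian, and generates this kernel. -/
def IsPeriodVector (src tgt : E → V) (r : V → ℕ) : Prop :=
  (∀ v : V, 0 < r v) ∧ Finset.univ.gcd r = 1 ∧
    lapApply src tgt (fun v => (r v : ℤ)) = 0 ∧
    ∀ q : V → ℤ, lapApply src tgt q = 0 → ∃ k : ℤ, q = k • fun v => (r v : ℤ)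

/-- The Laplacian matrix of the digraph. -/
def lapMatrix (src tgt : E → V) : Matrix V V ℤ :=
  Matrix.of fun v w =>
    if v = w then (outdeg src v : ℤ) - numEdges src tgt v v
    else -(numEdges src tgt w v : ℤ)

/-- The determinant of the reduced Laplacian obtained by deleting the row and
column indexed by `v`. -/
def reducedLapDet (src tgt : E → V) (v : V) : ℤ :=
  (((lapMatrix src tgt).submatrix (fun a : {w : V // w ≠ v} => a.1)
    (fun a : {w : V // w ≠ v} => a.1)).det)

/-- The period constant `α := gcd_{v ∈ V} det Δ_v`. -/
def periodConstant (src tgt : E → V) : ℤ :=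
  Finset.univ.gcd (reducedLapDet src tgt)

/-- `IsWalk l a b`: the list of edges `l` forms a directed walk from `a` to `b`. -/
def IsWalk (src tgt : E → V) : List E → V → V → Prop
  | [], a, b => a = b
  | e :: l, a, b => src e = a ∧ IsWalk src tgt l (tgt e) b

/-- `IsPath l a b`: the list of edges `l` forms a directed path from `a` to `b`:
all visited vertices are distinct (except that the final vertex is allowed to
coincide with the starting vertex). -/
def IsPath (src tgt : E → V) (l : List E) (a b : V) : Prop :=
  IsWalk src tgt l a b ∧ (l.map tgt).Nodup ∧ a ∉ (l.map tgt).dropLast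

/-- `T` is an arborescence rooted at `s`: for every vertex `v` there is a unique
directed path from `s` to `v` using only edges of `T`. -/
def IsArborescence (src tgt : E → V) (s : V) (T : Finset E) : Prop :=
  ∀ v : V, ∃! l : List E, (∀ e ∈ l, e ∈ T) ∧ IsPath src tgt l s v

/-- The edge `e ∉ T` is externally active for the arborescence `T` (w.r.t. the linear
order on `E`): where `P₁`, `P₂` are the two edge-disjoint directed paths in `T ∪ {e}`
sharing their starting vertex and ending at `tgt e`, with `e ∈ P₁`, the smallest edge
on `P₁ ++ P₂` lies on `P₁`. -/
def ExtActive [LinearOrder E] (src tgt : E → V) (T : Finset E) (e : E) : Prop :=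
  e ∉ T ∧ ∃ (u : V) (p₁ p₂ : List E),
    (∀ f ∈ p₁, f ∈ T ∨ f = e) ∧ (∀ f ∈ p₂, f ∈ T ∨ f = e) ∧
    IsPath src tgt p₁ u (tgt e) ∧ IsPath src tgt p₂ u (tgt e) ∧
    e ∈ p₁ ∧ (∀ f ∈ p₁, f ∉ p₂) ∧
    ∃ fmin ∈ p₁, ∀ f ∈ p₁ ++ p₂, fmin ≤ f

/-- The external activity `e(T)` of an arborescence `T`. -/
noncomputable def extActivity [LinearOrder E] (src tgt : E → V) (T : Finset E) : ℕ :=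
  Nat.card {e : E // ExtActive src tgt T e}

/-- The greedoid Tutte polynomial `T(G,s;y) = Σ_{T ∈ A(G,s)} y^{e(T)}`. -/
noncomputable def greedoidTutte [LinearOrder E] (src tgt : E → V) (s : V) : Polynomial ℤ :=
  ∑ᶠ T : {T : Finset E // IsArborescence src tgt s T}, X ^ extActivity src tgt T.1

/-- `f` is a `G^r`-parking function rooted at `s`. -/
def IsParking (src tgt : E → V) (s : V) (f : {v : V // v ≠ s} → ℕ) : Prop :=
  ∀ A : Finset {v : V // v ≠ s}, A.Nonempty →
    ∃ v ∈ A, f v < Nat.card {e : E // (∀ w ∈ A, src e ≠ w.1) ∧ tgt e = v.1}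

/-- The d-level of a `G^r`-parking function: `|E| − |V| + 1 − Σ_{v≠s} f(v)`. -/
noncomputable def parkDlvl (src : E → V) (s : V) (f : {v : V // v ≠ s} → ℕ) : ℕ :=
  ((Fintype.card E : ℤ) - Fintype.card V + 1 - ∑ v : {v : V // v ≠ s}, (f v : ℤ)).toNat

/-- `σ` is an s-decreasing traversal: a sequence in which every vertex and edge of `G`
appears exactly once, satisfying (R1) every vertex other than `s` is immediately
preceded by an edge targeting it, and (R2) every edge is the `<ₑ`-maximum edge not yet
seen whose source has been seen. -/
def IsTraversal [LinearOrder E] (src tgt : E → V) (s : V) (σ : List (V ⊕ E)) : Prop :=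
  σ.Nodup ∧ (∀ x : V ⊕ E, x ∈ σ) ∧
  (∀ (i : ℕ) (hi : i < σ.length) (v : V),
      σ.get ⟨i, hi⟩ = Sum.inl v → v ≠ s →
      0 < i ∧ ∃ e : E, tgt e = v ∧ σ.get ⟨i - 1, by omega⟩ = Sum.inr e) ∧
  (∀ (i : ℕ) (hi : i < σ.length) (e : E),
      σ.get ⟨i, hi⟩ = Sum.inr e →
      Sum.inl (src e) ∈ σ.take i ∧
      ∀ f : E, Sum.inr f ∉ σ.take i → Sum.inl (src f) ∈ σ.take i → f ≤ e)

open scoped Classical in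
/-- `Υ(σ)`: the set of edges immediately preceding a non-sink vertex in `σ`. -/
noncomputable def Upsilon (src tgt : E → V) (s : V) (σ : List (V ⊕ E)) : Finset E :=
  Finset.univ.filter fun e =>
    ∃ (i : ℕ) (hi : i < σ.length) (v : V), v ≠ s ∧ σ.get ⟨i, hi⟩ = Sum.inl v ∧
      0 < i ∧ ∃ hj : i - 1 < σ.length, σ.get ⟨i - 1, hj⟩ = Sum.inr e

/-- The strength of `σ`: the number of strong edges, i.e. edges whose target appears
before them in `σ`. -/
noncomputable def strength (tgt : E → V) (σ : List (V ⊕ E)) : ℕ :=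
  Nat.card {e : E // ∃ (i : ℕ) (hi : i < σ.length),
    σ.get ⟨i, hi⟩ = Sum.inr e ∧ Sum.inl (tgt e) ∈ σ.take i}

/-- `Ψ(σ)(v)`: one less than the number of edges targeting `v` that appear before the
vertex `v` in `σ`. -/
def Psi (tgt : E → V) (s : V) (σ : List (V ⊕ E)) : {v : V // v ≠ s} → ℕ :=
  fun v =>
    (((σ.takeWhile fun x => x ≠ Sum.inl v.1).filterMap Sum.getRight?).filter
      fun e => tgt e = v.1).length - 1

/-!
Restricting a legal firing sequence from `c` to `d` to `V ∖ {s}` turns every firing of `s` into the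
addition of `β_s`, and adding chips keeps the other moves legal; so `ĉ + k·β_s ⤳_s d̂`, where `k`
counts the firings of `s`. Together with uniqueness of stabilizations this is the statement about
`~_s`.

A recurrent `c` lies on a nonempty closed firing sequence. As `s`-firing terminates, `s` has to fire
in it, so `ĉ + k·β_s ⤳_s ĉ` with `k > 0`, and therefore `ĉ + N·k·β_s ⤳_s ĉ` for all `N`. Since every
vertex is reachable from `s`, the chips of `N·β_s` can for suitable `N` be spread so as to dominate
any prescribed `c₁`, which exhibits `(ĉ)°` as the stabilization of some `c₁ + c₂`.
-/

section Walk

variable {src tgt : E → V} {s v w : V}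

/-- `Reachable src tgt v w`: there is a directed path from `v` to `w`. Strong connectivity is split
into `∀ v, Reachable src tgt v s`, which makes stabilizations exist, and
`∀ v, Reachable src tgt s v`, which lets chips spread from `s` to every vertex. -/
def Reachable (src tgt : E → V) : V → V → Prop :=
  Relation.ReflTransGen fun a b => ∃ e : E, src e = a ∧ tgt e = b

/-- The length of a shortest directed walk from `v` to `s`; it is `0` if there is no such walk. -/
noncomputable def walkDist (src tgt : E → V) (s v : V) : ℕ :=
  sInf {n | ∃ l, IsWalk src tgt l v s ∧ l.length = n}

omit [Fintype V] [DecidableEq V] [Fintype E] [DecidableEq E]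

lemma Reachable.exists_isWalk (h : Reachable src tgt v w) : ∃ l, IsWalk src tgt l v w := by
  induction h using Relation.ReflTransGen.head_induction_on with
  | refl => exact ⟨[], rfl⟩
  | head hstep _ ih =>
    obtain ⟨e, rfl, rfl⟩ := hstep
    obtain ⟨l, hl⟩ := ih
    exact ⟨e :: l, rfl, hl⟩

lemma Reachable.exists_walkDist_lt (h : Reachable src tgt v s) (hv : v ≠ s) :
    ∃ e, src e = v ∧ walkDist src tgt s (tgt e) < walkDist src tgt s v := by
  obtain ⟨l₀, hl₀⟩ := h.exists_isWalk
  have hne : {n | ∃ l, IsWalk src tgt l v s ∧ l.length = n}.Nonempty := ⟨_, l₀, hl₀, rfl⟩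
  obtain ⟨l, hl, hlen⟩ : ∃ l, IsWalk src tgt l v s ∧ l.length = walkDist src tgt s v :=
    Nat.sInf_mem hne
  cases l with
  | nil => exact absurd hl hv
  | cons e l =>
    refine ⟨e, hl.1, ?_⟩
    calc walkDist src tgt s (tgt e) ≤ l.length := Nat.sInf_le ⟨l, hl.2, rfl⟩
      _ < walkDist src tgt s v := hlen ▸ Nat.lt_succ_self _

end Walk

section Firing

variable {src tgt : E → V} {s : V} {a b c d : {v : V // v ≠ s} → ℕ} {u v w : {v : V // v ≠ s}}

omit [Fintype V] [DecidableEq E]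

lemma numEdges_pos (src tgt : E → V) (e : E) : 0 < numEdges src tgt (src e) (tgt e) :=
  card_pos.mpr ⟨e, by simp⟩

lemma sfire_add_ite (hv : outdeg src v ≤ c v) (w : {v : V // v ≠ s}) :
    sfire src tgt s c v w + (if w = v then outdeg src v else 0) = c w + numEdges src tgt v w := by
  grind [sfire]

lemma numEdges_le_sfire (hv : outdeg src v ≤ c v) (w : {v : V // v ≠ s}) :
    numEdges src tgt v w ≤ sfire src tgt s c v w := by
  grind [sfire]

lemma le_sfire_of_ne (hwv : w ≠ v) : c w ≤ sfire src tgt s c v w := by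
  grind [sfire]

lemma sfire_add_right (hv : outdeg src v ≤ c v) (a : {v : V // v ≠ s} → ℕ) :
    sfire src tgt s (c + a) v = sfire src tgt s c v + a := by
  funext w
  grind [sfire, Pi.add_apply]

lemma sfire_sfire_comm (hu : outdeg src u ≤ c u) (hv : outdeg src v ≤ c v) (huv : u ≠ v) :
    sfire src tgt s (sfire src tgt s c u) v = sfire src tgt s (sfire src tgt s c v) u := by
  funext w
  grind [sfire]

lemma SFireStep.diamond (ha : SFireStep src tgt s c a) (hb : SFireStep src tgt s c b) :
    ∃ d, Relation.ReflGen (SFireStep src tgt s) a d ∧ SReach src tgt s b d := by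
  obtain ⟨u, hu, rfl⟩ := ha
  obtain ⟨v, hv, rfl⟩ := hb
  obtain rfl | huv := eq_or_ne u v
  · exact ⟨_, .refl, .refl⟩
  · exact ⟨_, .single ⟨v, hv.trans (le_sfire_of_ne huv.symm), rfl⟩,
      .single ⟨u, hu.trans (le_sfire_of_ne huv), sfire_sfire_comm hu hv huv⟩⟩

lemma SStable.eq_of_sReach (hc : SStable src s c) (h : SReach src tgt s c d) : d = c := by
  obtain rfl | ⟨_, ⟨v, hv, _⟩, _⟩ := Relation.ReflTransGen.cases_head h
  · rfl
  · exact absurd hv (hc v).not_ge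

lemma SStable.eq_of_sReach_of_sReach (hsa : SStable src s a) (hsb : SStable src s b)
    (ha : SReach src tgt s c a) (hb : SReach src tgt s c b) : a = b := by
  obtain ⟨d, had, hbd⟩ := Relation.church_rosser (fun _ _ _ => SFireStep.diamond) ha hb
  rw [← hsa.eq_of_sReach had, hsb.eq_of_sReach hbd]

lemma SReach.add_right (h : SReach src tgt s c d) (a : {v : V // v ≠ s} → ℕ) :
    SReach src tgt s (c + a) (d + a) := by
  refine Relation.ReflTransGen.lift (· + a) ?_ _ _ h
  rintro c _ ⟨v, hv, rfl⟩
  exact ⟨v, hv.trans (Nat.le_add_right _ _), (sfire_add_right hv a).symm⟩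

lemma SReach.add (h : SReach src tgt s c d) (h' : SReach src tgt s a b) :
    SReach src tgt s (c + a) (d + b) := by
  have hright : SReach src tgt s (d + a) (d + b) := by
    simpa only [add_comm d] using h'.add_right d
  exact (h.add_right a).trans hright

lemma SReach.add_nsmul_self (h : SReach src tgt s (c + b) c) (m : ℕ) :
    SReach src tgt s (c + m • b) c := by
  induction m with
  | zero => simp [SReach, Relation.ReflTransGen.refl]
  | succ m ih =>
    rw [succ_nsmul, ← add_assoc]
    exact (ih.add_right b).trans h

/-- The `s`-configurations that arise by legal `s`-firing from a multiple of `β_s`, i.e. from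
firing `s` repeatedly without counting its chips. -/
def betaReachable (src tgt : E → V) (s : V) : AddSubmonoid ({v : V // v ≠ s} → ℕ) where
  carrier := {d | ∃ N : ℕ, SReach src tgt s (N • betaS src tgt s) d}
  zero_mem' := ⟨0, by simp [SReach, Relation.ReflTransGen.refl]⟩
  add_mem' := by
    rintro a b ⟨M, ha⟩ ⟨N, hb⟩
    exact ⟨M + N, add_nsmul (betaS src tgt s) M N ▸ ha.add hb⟩

lemma betaS_mem_betaReachable (src tgt : E → V) (s : V) :
    betaS src tgt s ∈ betaReachable src tgt s :=
  ⟨1, by simp [SReach, Relation.ReflTransGen.refl]⟩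

lemma sfire_mem_betaReachable (hc : c ∈ betaReachable src tgt s) (hv : outdeg src v ≤ c v) :
    sfire src tgt s c v ∈ betaReachable src tgt s := by
  obtain ⟨N, hN⟩ := hc
  exact ⟨N, hN.tail ⟨v, hv, rfl⟩⟩

lemma Reachable.exists_mem_betaReachable_pos {v : V} (h : Reachable src tgt s v) (hv : v ≠ s) :
    ∃ d ∈ betaReachable src tgt s, 0 < d ⟨v, hv⟩ := by
  induction h with
  | refl => exact absurd rfl hv
  | tail _ hstep ih =>
    obtain ⟨e, rfl, rfl⟩ := hstep
    have he := numEdges_pos src tgt e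
    by_cases hsrc : src e = s
    · exact ⟨_, betaS_mem_betaReachable src tgt s, by simpa [betaS, hsrc] using he⟩
    · obtain ⟨d, hd, hpos⟩ := ih hsrc
      have hlegal : outdeg src (src e) ≤ (outdeg src (src e) • d) ⟨src e, hsrc⟩ :=
        Nat.le_mul_of_pos_right _ hpos
      exact ⟨_, sfire_mem_betaReachable (v := ⟨src e, hsrc⟩) (nsmul_mem hd _) hlegal,
        he.trans_le (numEdges_le_sfire (v := ⟨src e, hsrc⟩) hlegal ⟨tgt e, hv⟩)⟩

end Firing

section Restrict

variable {src tgt : E → V} {c d : V → ℕ}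

omit [Fintype V] [DecidableEq E]

lemma Recurrent.transGen_self (hc : Recurrent src tgt c) :
    Relation.TransGen (FireStep src tgt) c c := by
  obtain ⟨hunstable, hreturn⟩ := hc
  obtain ⟨v, hv⟩ : ∃ v, outdeg src v ≤ c v := by simpa [Stable] using hunstable
  have hfire : FireStep src tgt c (fire src tgt c v) := ⟨v, hv, rfl⟩
  exact Relation.TransGen.head' hfire (hreturn _ (.single hfire))

lemma FireStep.restrictS_eq_or_sFireStep (s : V) (h : FireStep src tgt c d) :
    restrictS s d = restrictS s c + betaS src tgt s ∨
      SFireStep src tgt s (restrictS s c) (restrictS s d) := by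
  obtain ⟨v, hv, rfl⟩ := h
  obtain rfl | hvs := eq_or_ne v s
  · left
    funext w
    simp [restrictS, fire, betaS, w.2]
  · refine .inr ⟨⟨v, hvs⟩, hv, ?_⟩
    funext w
    simp [restrictS, fire, sfire, Subtype.ext_iff]

lemma Reach.exists_sReach_restrictS (s : V) (h : Reach src tgt c d) :
    ∃ k : ℕ, SReach src tgt s (restrictS s c + k • betaS src tgt s) (restrictS s d) := by
  induction h with
  | refl => exact ⟨0, by simp [SReach, Relation.ReflTransGen.refl]⟩
  | tail _ hstep ih =>
    obtain ⟨k, hk⟩ := ih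
    obtain heq | hsfire := hstep.restrictS_eq_or_sFireStep s
    · refine ⟨k + 1, ?_⟩
      rw [heq, succ_nsmul, ← add_assoc]
      exact hk.add_right _
    · exact ⟨k, hk.tail hsfire⟩

lemma transGen_or_exists_sReach_restrictS (s : V) (h : Relation.TransGen (FireStep src tgt) c d) :
    Relation.TransGen (SFireStep src tgt s) (restrictS s c) (restrictS s d) ∨
      ∃ k : ℕ, SReach src tgt s (restrictS s c + (k + 1) • betaS src tgt s) (restrictS s d) := by
  obtain ⟨b, hcb, hbd⟩ := Relation.TransGen.head'_iff.mp h
  obtain ⟨k, hk⟩ := Reach.exists_sReach_restrictS s hbd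
  obtain heq | hsfire := hcb.restrictS_eq_or_sFireStep s
  · refine .inr ⟨k, ?_⟩
    rwa [heq, add_assoc, ← succ_nsmul'] at hk
  · cases k with
    | zero => exact .inl (.head' hsfire (by simpa [SReach] using hk))
    | succ k => exact .inr ⟨k, .trans (SReach.add_right (.single hsfire) _) hk⟩

end Restrict

section Potential

variable {src tgt : E → V} {s : V} {c d : {v : V // v ≠ s} → ℕ}

omit [DecidableEq E]

lemma sum_numEdges_mul (src tgt : E → V) (v : V) (f : V → ℕ) :
    ∑ w, numEdges src tgt v w * f w = ∑ e with src e = v, f (tgt e) := by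
  rw [← sum_fiberwise' _ tgt f]
  simp [numEdges, filter_filter]

lemma SFireStep.sum_mul_lt {wt : V → ℕ}
    (hwt : ∀ v ≠ s, ∑ e with src e = v, wt (tgt e) < outdeg src v * wt v)
    (h : SFireStep src tgt s c d) : ∑ w, d w * wt w < ∑ w, c w * wt w := by
  obtain ⟨v, hv, rfl⟩ := h
  have hbalance : ∑ w, sfire src tgt s c v w * wt w + outdeg src v * wt v =
      ∑ w, c w * wt w + ∑ w : {v : V // v ≠ s}, numEdges src tgt v w * wt w := by
    simp_rw [← sum_add_distrib, ← add_mul, ← sfire_add_ite hv, add_mul, sum_add_distrib]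
    simp
  have hlost : ∑ w : {v : V // v ≠ s}, numEdges src tgt v w * wt w ≤
      ∑ w, numEdges src tgt v w * wt w := by
    rw [← Fintype.sum_subtype_add_sum_subtype (· ≠ s)]
    exact Nat.le_add_right _ _
  have hdrop := sum_numEdges_mul src tgt v wt ▸ hwt v v.2
  omega

end Potential

section Stabilization

variable {src tgt : E → V} {s : V} {c d : {v : V // v ≠ s} → ℕ}

omit [Fintype V] [DecidableEq E]

variable [Finite V]

lemma exists_outdeg_mul_lt_sum (hs : ∀ v, Reachable src tgt v s) :
    ∃ g : V → ℕ, ∀ v ≠ s, outdeg src v * g v < ∑ e with src e = v, g (tgt e) := by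
  have := Fintype.ofFinite V
  -- `N` exceeds every out-degree, so one edge towards `s` outweighs all the others.
  set N := Fintype.card E + 1
  set D := univ.sup (walkDist src tgt s)
  have hD (v : V) : walkDist src tgt s v ≤ D := le_sup (mem_univ v)
  refine ⟨fun v => N ^ (D - walkDist src tgt s v), fun v hv => ?_⟩
  obtain ⟨e, rfl, hlt⟩ := (hs v).exists_walkDist_lt hv
  have hexp : D - walkDist src tgt s (src e) + 1 ≤ D - walkDist src tgt s (tgt e) := by
    have hle := hD (src e)
    omega
  calc outdeg src (src e) * N ^ (D - walkDist src tgt s (src e))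
      < N * N ^ (D - walkDist src tgt s (src e)) := by
        gcongr
        exact Nat.lt_succ_of_le (card_le_univ _)
    _ ≤ N ^ (D - walkDist src tgt s (tgt e)) := by
        rw [← pow_succ']
        exact Nat.pow_le_pow_right (Nat.succ_pos _) hexp
    _ ≤ ∑ e' with src e' = src e, N ^ (D - walkDist src tgt s (tgt e')) :=
        single_le_sum (f := fun e' => N ^ (D - walkDist src tgt s (tgt e')))
          (fun _ _ => Nat.zero_le _) (by simp)

lemma exists_sum_lt_outdeg_mul (hs : ∀ v, Reachable src tgt v s) :
    ∃ wt : V → ℕ, ∀ v ≠ s, ∑ e with src e = v, wt (tgt e) < outdeg src v * wt v := by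
  have := Fintype.ofFinite V
  obtain ⟨g, hg⟩ := exists_outdeg_mul_lt_sum hs
  set B := univ.sup g
  have hB (v : V) : B - g v + g v = B := Nat.sub_add_cancel (le_sup (mem_univ v))
  refine ⟨fun v => B - g v, fun v hv => ?_⟩
  have htotal : ∑ e with src e = v, (B - g (tgt e)) + ∑ e with src e = v, g (tgt e) =
      outdeg src v * (B - g v) + outdeg src v * g v := by
    simp [← sum_add_distrib, ← mul_add, hB, outdeg]
  have hdrop := hg v hv
  dsimp only
  omega

lemma wellFounded_flip_sFireStep (hs : ∀ v, Reachable src tgt v s) :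
    WellFounded (flip (SFireStep src tgt s)) := by
  have := Fintype.ofFinite V
  obtain ⟨wt, hwt⟩ := exists_sum_lt_outdeg_mul hs
  exact Subrelation.wf (fun h => SFireStep.sum_mul_lt hwt h)
    (measure fun c : {v : V // v ≠ s} → ℕ => ∑ w, c w * wt w).wf

lemma not_transGen_sFireStep_self (hs : ∀ v, Reachable src tgt v s) :
    ¬ Relation.TransGen (SFireStep src tgt s) c c := fun h =>
  (wellFounded_flip_sFireStep hs).transGen.irrefl.irrefl c (Relation.transGen_swap.mpr h)

lemma exists_sReach_sStable (hs : ∀ v, Reachable src tgt v s) (c : {v : V // v ≠ s} → ℕ) :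
    ∃ d, SReach src tgt s c d ∧ SStable src s d := by
  induction c using (wellFounded_flip_sFireStep hs).induction with
  | _ c ih =>
    by_cases hc : SStable src s c
    · exact ⟨c, .refl, hc⟩
    · obtain ⟨v, hv⟩ : ∃ v : {v : V // v ≠ s}, outdeg src v ≤ c v := by
        simpa only [SStable, not_forall, not_lt] using hc
      have hfire : SFireStep src tgt s c (sfire src tgt s c v) := ⟨v, hv, rfl⟩
      obtain ⟨d, hd, hstable⟩ := ih _ hfire
      exact ⟨d, .head hfire hd, hstable⟩

lemma sReach_stab (hs : ∀ v, Reachable src tgt v s) (c : {v : V // v ≠ s} → ℕ) :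
    SReach src tgt s c (stab src tgt s c) :=
  (Classical.epsilon_spec (exists_sReach_sStable hs c)).1

lemma sStable_stab (hs : ∀ v, Reachable src tgt v s) (c : {v : V // v ≠ s} → ℕ) :
    SStable src s (stab src tgt s c) :=
  (Classical.epsilon_spec (exists_sReach_sStable hs c)).2

lemma SReach.stab_eq (h : SReach src tgt s c d) (hs : ∀ v, Reachable src tgt v s) :
    stab src tgt s c = stab src tgt s d :=
  (sStable_stab hs c).eq_of_sReach_of_sReach (sStable_stab hs d) (sReach_stab hs c)
    (h.trans (sReach_stab hs d))

end Stabilization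

section Recurrence

variable {src tgt : E → V} {s : V} {a : {v : V // v ≠ s} → ℕ}

omit [Fintype V] [DecidableEq E]

variable [Finite V]

lemma exists_mem_betaReachable_ge (hs : ∀ v, Reachable src tgt s v)
    (c : {v : V // v ≠ s} → ℕ) : ∃ d ∈ betaReachable src tgt s, c ≤ d := by
  have := Fintype.ofFinite V
  choose d hd hpos using fun v : {v : V // v ≠ s} => (hs v).exists_mem_betaReachable_pos v.2
  refine ⟨∑ v, c v • d v, sum_mem fun v _ => nsmul_mem (hd v) _, fun v => ?_⟩
  calc c v ≤ (c v • d v) v := Nat.le_mul_of_pos_right _ (hpos v)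
    _ ≤ (∑ u, c u • d u) v :=
        single_le_sum (f := fun u => c u • d u) (fun _ _ => bot_le) (mem_univ v) v

lemma SReach.sRecurrent_stab (hG : StronglyConnected src tgt) {k : ℕ}
    (h : SReach src tgt s (a + (k + 1) • betaS src tgt s) a) :
    SRecurrent src tgt s (stab src tgt s a) := by
  intro c₁
  obtain ⟨d, ⟨N, hN⟩, hd⟩ := exists_mem_betaReachable_ge (hG s) c₁
  set rest := a + (N * k) • betaS src tgt s
  have hsplit : a + N • (k + 1) • betaS src tgt s = N • betaS src tgt s + rest := by
    simp only [rest]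
    module
  refine ⟨d - c₁ + rest, ?_⟩
  calc stab src tgt s (c₁ + (d - c₁ + rest))
      = stab src tgt s (d + rest) := by rw [← add_assoc, add_tsub_cancel_of_le hd]
    _ = stab src tgt s (N • betaS src tgt s + rest) := ((hN.add_right rest).stab_eq (hG · s)).symm
    _ = stab src tgt s a := hsplit ▸ (h.add_nsmul_self N).stab_eq (hG · s)

theorem stab_restrict_sRecurrent_general (src tgt : E → V) (hG : StronglyConnected src tgt)
    (s : V) :
    (∀ c : V → ℕ, Relation.TransGen (FireStep src tgt) c c →
      SRecurrent src tgt s (stab src tgt s (restrictS s c))) ∧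
    (∀ c d : V → ℕ, Reach src tgt c d →
      SEquiv src tgt s (stab src tgt s (restrictS s c)) (stab src tgt s (restrictS s d))) := by
  refine ⟨fun c hc => ?_, fun c d hcd => ?_⟩
  · obtain hcycle | ⟨k, hk⟩ := transGen_or_exists_sReach_restrictS s hc
    · exact absurd hcycle (not_transGen_sFireStep_self (hG · s))
    · exact hk.sRecurrent_stab hG
  · obtain ⟨k, hk⟩ := hcd.exists_sReach_restrictS s
    have hstab := (sReach_stab (hG · s) (restrictS s c)).add_right (k • betaS src tgt s)
    exact ⟨k, (hstab.stab_eq (hG · s)).symm.trans (hk.stab_eq (hG · s))⟩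

end Recurrence

/-- If `c` is recurrent then `(ĉ)°` is s-recurrent; moreover if `c ~ d`
for recurrent `c`, `d` then `(ĉ)° ~_s (d̂)°`. -/
theorem stab_restrict_sRecurrent [Nonempty V] (src tgt : E → V)
    (hG : StronglyConnected src tgt) (s : V) :
    (∀ c : V → ℕ, Recurrent src tgt c →
      SRecurrent src tgt s (stab src tgt s (restrictS s c))) ∧
    (∀ c d : V → ℕ, Recurrent src tgt c → Recurrent src tgt d → Reach src tgt c d →
      SEquiv src tgt s (stab src tgt s (restrictS s c)) (stab src tgt s (restrictS s d))) := by
  obtain ⟨hrec, hequiv⟩ := stab_restrict_sRecurrent_general src tgt hG s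
  exact ⟨fun c hc => hrec c hc.transGen_self, fun c d _ _ hcd => hequiv c d hcd⟩

end SandpileBM
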